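/- Let X be a real Banach space and let g : X → X be a compact map. Then at least one of the following holds: (a) g has a fixed point, i.e. there exists u ∈ X with g(u) = u; or (b) the set K(g) = {u ∈ X : u = t·g(u) for some t with 0 < t < 1} is unbounded. -/

import Mathlib

section LSAux
open Set Metric MeasureTheory

/-- `t ↦ det (1 + t A)` is a polynomial of degree at most the dimension. -/
theorem ls_det_poly {E : Type*} [NormedAddCommGroup E] [NormedSpace ℝ E] [FiniteDimensional ℝ E]
    (A : E →L[ℝ] E) :
    ∃ q : Polynomial ℝ, q.natDegree ≤ Module.finrank ℝ E ∧
      ∀ t : ℝ, q.eval t = (ContinuousLinearMap.id ℝ E + t • A).det := by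
  classical
  let b := Module.finBasis ℝ E
  let M := LinearMap.toMatrix b b (A : E →ₗ[ℝ] E)
  refine ⟨Matrix.det ((Polynomial.X : Polynomial ℝ) • M.map Polynomial.C
    + (1 : Matrix _ _ ℝ).map Polynomial.C), ?_, fun t => ?_⟩
  · simpa using Polynomial.natDegree_det_X_add_C_le M 1
  · have h1 : (ContinuousLinearMap.id ℝ E + t • A).det
        = (LinearMap.toMatrix b b ((ContinuousLinearMap.id ℝ E + t • A : E →L[ℝ] E) :
          E →ₗ[ℝ] E)).det := by
      rw [LinearMap.det_toMatrix]
    rw [h1, ← Polynomial.coe_evalRingHom, RingHom.map_det]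
    congr 1
    have h2 : ((ContinuousLinearMap.id ℝ E + t • A : E →L[ℝ] E) : E →ₗ[ℝ] E)
        = LinearMap.id + t • (A : E →ₗ[ℝ] E) := rfl
    rw [h2, map_add (LinearMap.toMatrix b b), map_smul (LinearMap.toMatrix b b), LinearMap.toMatrix_id]
    ext i j
    by_cases hij : i = j
    · subst hij; simp [M, add_comm]; exact mul_comm _ _
    · simp [M, hij]; exact mul_comm _ _

theorem ls_det_ne {E : Type*} [NormedAddCommGroup E] [NormedSpace ℝ E] [FiniteDimensional ℝ E]
    (A : E →L[ℝ] E) (L t : ℝ) (hA : ‖A‖ ≤ L) (ht : 0 ≤ t) (htL : t * L < 1) :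
    (ContinuousLinearMap.id ℝ E + t • A).det ≠ 0 := by
  intro h0
  have h := LinearMap.bot_lt_ker_of_det_eq_zero (R := ℝ) (M := E) h0
  obtain ⟨v, hv, hv0⟩ := (Submodule.ne_bot_iff _).1 h.ne'
  have h1 : v + t • A v = 0 := hv
  have h2 : ‖v‖ = t * ‖A v‖ := by
    rw [eq_neg_of_add_eq_zero_left h1, norm_neg, norm_smul, Real.norm_of_nonneg ht]
    rw [← eq_neg_of_add_eq_zero_left h1]
  have h3 : ‖A v‖ ≤ L * ‖v‖ := A.le_of_opNorm_le hA v
  have h4 : 0 < ‖v‖ := norm_pos_iff.2 hv0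
  nlinarith [mul_le_mul_of_nonneg_left h3 ht]

theorem ls_det_pos {E : Type*} [NormedAddCommGroup E] [NormedSpace ℝ E] [FiniteDimensional ℝ E]
    (A : E →L[ℝ] E) (L t : ℝ) (hA : ‖A‖ ≤ L) (ht : 0 ≤ t) (htL : t * L < 1) :
    0 < (ContinuousLinearMap.id ℝ E + t • A).det := by
  by_contra hneg
  push Not at hneg
  have hL : 0 ≤ L := (norm_nonneg _).trans hA
  have hc : Continuous fun s : ℝ => (ContinuousLinearMap.id ℝ E + s • A).det :=
    ContinuousLinearMap.continuous_det.comp (by fun_prop)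
  have h0 : (ContinuousLinearMap.id ℝ E + (0:ℝ) • A).det = 1 := by
    simp [ContinuousLinearMap.det]
  obtain ⟨s, hs, hs0⟩ := intermediate_value_Icc' ht hc.continuousOn
    (show (0:ℝ) ∈ Icc _ _ from ⟨hneg, by rw [h0]; norm_num⟩)
  exact ls_det_ne A L s hA hs.1 (by nlinarith [hs.2]) hs0

/-- Gluing: a map Lipschitz on a closed ball and zero on the sphere, extended by zero. -/
theorem ls_glue {E : Type*} [NormedAddCommGroup E] [NormedSpace ℝ E]
    (h : E → E) (R : ℝ) (L : NNReal)
    (hL : LipschitzOnWith L h (closedBall 0 R)) (hz : ∀ x, ‖x‖ = R → h x = 0) :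
    LipschitzWith L ((closedBall (0:E) R).indicator h) := by
  classical
  have key : ∀ x y : E, ‖x‖ ≤ R → R < ‖y‖ → ‖h x‖ ≤ L * ‖x - y‖ := by
    intro x y hx hy
    have hc : Continuous fun s : ℝ => ‖x + s • (y - x)‖ := by fun_prop
    obtain ⟨s, hs, hs0⟩ := intermediate_value_Icc (zero_le_one' ℝ) hc.continuousOn
      (show R ∈ Icc _ _ from ⟨by simpa using hx, by simpa using hy.le⟩)
    have h1 := hL.dist_le_mul x (by simpa using hx) (x + s • (y - x)) (by simpa using hs0.le)
    rw [hz _ hs0, dist_zero_right, dist_eq_norm] at h1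
    refine h1.trans (mul_le_mul_of_nonneg_left ?_ L.2)
    have : x - (x + s • (y - x)) = s • (x - y) := by module
    rw [this, norm_smul, Real.norm_of_nonneg hs.1]
    nlinarith [norm_nonneg (x - y), hs.2]
  refine LipschitzWith.of_dist_le_mul fun x y => ?_
  simp only [Set.indicator, mem_closedBall, dist_zero_right]
  split_ifs with hx hy hy
  · exact hL.dist_le_mul x (by simpa using hx) y (by simpa using hy)
  · rw [dist_zero_right, dist_eq_norm]; exact key x y hx (not_le.1 hy)
  · rw [dist_zero_left, dist_eq_norm, norm_sub_rev]; exact key y x hy (not_le.1 hx)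
  · simp only [dist_self]; positivity

/-- For small `t`, `x ↦ x + t h x` is a bijection of the ball. -/
theorem ls_bij {E : Type*} [NormedAddCommGroup E] [NormedSpace ℝ E] [CompleteSpace E]
    (h : E → E) (R : ℝ) (L : NNReal)
    (hL : LipschitzOnWith L h (closedBall 0 R)) (hz : ∀ x, ‖x‖ = R → h x = 0)
    (t : NNReal) (ht : t * L < 1) :
    BijOn (fun x => x + (t:ℝ) • h x) (closedBall 0 R) (closedBall 0 R) := by
  classical
  set k := (closedBall (0:E) R).indicator h with hk
  have hkL : LipschitzWith L k := ls_glue h R L hL hz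
  have hcon : ∀ y : E, ContractingWith (t * L) (fun x => y - (t:ℝ) • k x) := by
    intro y
    refine ⟨ht, LipschitzWith.of_dist_le_mul fun a b => ?_⟩
    rw [dist_sub_left, dist_smul₀, Real.norm_of_nonneg t.coe_nonneg]
    have := hkL.dist_le_mul a b
    push_cast
    nlinarith [mul_le_mul_of_nonneg_left this t.2]
  have hinj : ∀ a b : E, a + (t:ℝ) • k a = b + (t:ℝ) • k b → a = b := by
    intro a b hab
    refine (hcon (a + (t:ℝ) • k a)).fixedPoint_unique' (x := a) (y := b) ?_ ?_
    · simp [Function.IsFixedPt]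
    · simp [Function.IsFixedPt, hab]
  have hin : ∀ x ∈ closedBall (0:E) R, k x = h x := fun x hx => indicator_of_mem hx _
  have hout : ∀ x ∉ closedBall (0:E) R, k x = 0 := fun x hx => indicator_of_notMem hx _
  refine ⟨fun x hx => ?_, fun a ha b hb hab => ?_, fun y hy => ?_⟩
  · by_contra hn
    have h1 : x + (t:ℝ) • h x = x := by
      symm
      apply hinj
      rw [hout _ hn, hin _ hx]; simp
    simp only [h1] at hn
    exact hn hx
  · apply hinj
    rw [hin a ha, hin b hb]; exact hab
  · have hfix := (hcon y).fixedPoint_isFixedPt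
    set x := ContractingWith.fixedPoint _ (hcon y)
    have hx : y = x + (t:ℝ) • k x := sub_eq_iff_eq_add.1 hfix
    have hxm : x ∈ closedBall (0:E) R := by
      by_contra hn
      rw [hout x hn] at hx
      simp only [smul_zero, add_zero] at hx
      exact hn (hx ▸ hy)
    exact ⟨x, hxm, by simp only [← hin x hxm]; exact hx.symm⟩

theorem ls_integral {E : Type*} [NormedAddCommGroup E] [NormedSpace ℝ E]
    [FiniteDimensional ℝ E] [MeasurableSpace E] [BorelSpace E] (μ : Measure E)
    [μ.IsAddHaarMeasure] (h : E → E) (hh : ContDiff ℝ 1 h) (R : ℝ)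
    (hz : ∀ x, ‖x‖ = R → h x = 0) :
    ∫ x in closedBall (0:E) R, (ContinuousLinearMap.id ℝ E + fderiv ℝ h x).det ∂μ
      = μ.real (closedBall 0 R) := by
  classical
  have hcd : Continuous (fderiv ℝ h) := hh.continuous_fderiv (by norm_num)
  have hcomp : IsCompact (closedBall (0:E) R) := isCompact_closedBall _ _
  have hdiff : Differentiable ℝ h := hh.differentiable (by norm_num)
  obtain ⟨L, hLb⟩ : ∃ L : NNReal, ∀ x ∈ closedBall (0:E) R, ‖fderiv ℝ h x‖₊ ≤ L := by
    obtain ⟨C, hC⟩ := hcomp.exists_bound_of_continuousOn hcd.continuousOn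
    refine ⟨C.toNNReal, fun x hx => ?_⟩
    exact NNReal.le_toNNReal_of_coe_le (hC x hx)
  have hL : LipschitzOnWith L h (closedBall 0 R) :=
    (convex_closedBall (0:E) R).lipschitzOnWith_of_nnnorm_fderiv_le
      (fun x _ => hdiff x) hLb
  have hsmall : ∀ t : NNReal, t * L < 1 →
      ∫ x in closedBall (0:E) R, (ContinuousLinearMap.id ℝ E + (t:ℝ) • fderiv ℝ h x).det ∂μ
      = μ.real (closedBall 0 R) := by
    intro t ht
    have hb := ls_bij h R L hL hz t ht
    have hcv := integral_image_eq_integral_abs_det_fderiv_smul μ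
      (s := closedBall (0:E) R) (f := fun x => x + (t:ℝ) • h x)
      (f' := fun x => ContinuousLinearMap.id ℝ E + (t:ℝ) • fderiv ℝ h x)
      measurableSet_closedBall
      (fun x _ => ((hasFDerivAt_id x).add
        ((hdiff x).hasFDerivAt.const_smul (t:ℝ))).hasFDerivWithinAt)
      hb.injOn (fun _ => (1:ℝ))
    rw [hb.image_eq] at hcv
    simp only [smul_eq_mul, mul_one, integral_const, MeasurableSet.univ, measureReal_restrict_apply,
      univ_inter] at hcv
    rw [hcv]
    refine setIntegral_congr_fun measurableSet_closedBall fun x hx => ?_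
    exact (abs_of_pos (ls_det_pos _ L t (hLb x hx) t.2 (by exact_mod_cast ht))).symm
  set n := Module.finrank ℝ E
  set s := Finset.range (n + 1)
  let w : ℕ → NNReal := fun i => 1 / ((L + 1) * (i + 1))
  let v : ℕ → ℝ := fun i => (w i : ℝ)
  have hw : ∀ i, w i * L < 1 := by
    intro i
    have h1 : (w i : ℝ) * L < 1 := by
      simp only [w]
      push_cast
      rw [div_mul_eq_mul_div, div_lt_one (by positivity)]
      have : (0:ℝ) ≤ L := L.2
      have : (0:ℝ) ≤ i := by positivity
      nlinarith [mul_nonneg L.2 this]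
    exact_mod_cast h1
  have hvs : Set.InjOn v s := by
    intro i _ j _ hij
    simp only [v, w] at hij
    push_cast at hij
    have hLp : (0:ℝ) < L + 1 := by positivity
    have h2 := inv_injective (by simpa only [one_div] using hij)
    have h3 := mul_left_cancel₀ hLp.ne' h2
    exact_mod_cast add_right_cancel h3
  let c : ℕ → ℝ := fun i => (Lagrange.basis s v i).eval 1
  have hc1 : ∑ i ∈ s, c i = 1 := by
    have := congrArg (Polynomial.eval (1:ℝ)) (Lagrange.sum_basis hvs ⟨0, by simp [s]⟩)
    simpa [Polynomial.eval_finsetSum] using this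
  have hint : ∀ A : E →L[ℝ] E, (ContinuousLinearMap.id ℝ E + A).det
      = ∑ i ∈ s, c i * (ContinuousLinearMap.id ℝ E + v i • A).det := by
    intro A
    obtain ⟨q, hq, hqe⟩ := ls_det_poly A
    have hdeg : q.degree < s.card := by
      rw [Finset.card_range]
      refine lt_of_le_of_lt Polynomial.degree_le_natDegree ?_
      exact_mod_cast Nat.lt_succ_of_le hq
    have h1 := congrArg (Polynomial.eval (1:ℝ)) (Lagrange.eq_interpolate hvs hdeg)
    rw [hqe 1, one_smul, Lagrange.interpolate_apply, Polynomial.eval_finsetSum] at h1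
    rw [h1]
    refine Finset.sum_congr rfl fun i _ => ?_
    rw [Polynomial.eval_mul, Polynomial.eval_C, hqe, mul_comm]
  rw [setIntegral_congr_fun measurableSet_closedBall fun x _ => hint (fderiv ℝ h x)]
  rw [integral_finsetSum]
  · simp_rw [integral_const_mul]
    rw [Finset.sum_congr rfl fun i _ => by rw [hsmall (w i) (hw i)], ← Finset.sum_mul, hc1, one_mul]
  · intro i _
    refine ContinuousOn.integrableOn_compact hcomp (Continuous.continuousOn ?_)
    exact continuous_const.mul (ContinuousLinearMap.continuous_det.comp (by fun_prop))

/-- A `C¹` map that is the identity on a sphere has a zero. -/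
theorem ls_zero {E : Type*} [NormedAddCommGroup E] [InnerProductSpace ℝ E]
    [FiniteDimensional ℝ E] (φ : E → E) (hφ : ContDiff ℝ 1 φ) (R : ℝ) (hR : 0 < R)
    (hid : ∀ x, ‖x‖ = R → φ x = x) : ∃ x, φ x = 0 := by
  by_contra hne
  push Not at hne
  borelize E
  let μ : Measure E := Measure.addHaar
  let G : E → E := fun x => (R / ‖φ x‖) • φ x
  have hG : ContDiff ℝ 1 G :=
    (contDiff_const.div (hφ.norm ℝ hne) (fun x => norm_ne_zero_iff.2 (hne x))).smul hφ
  have hGd : Differentiable ℝ G := hG.differentiable (by norm_num)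
  have hGn : ∀ x, ‖G x‖ = R := by
    intro x
    have := norm_ne_zero_iff.2 (hne x)
    simp only [G, norm_smul, norm_div, norm_norm, Real.norm_of_nonneg hR.le]
    field_simp
  have hGid : ∀ x, ‖x‖ = R → G x - x = 0 := by
    intro x hx
    simp [G, hid x hx, hx, hR.ne']
  have hI := ls_integral μ (fun x => G x - x) (hG.sub contDiff_id) R hGid
  have hdet : ∀ x, (ContinuousLinearMap.id ℝ E + fderiv ℝ (fun x => G x - x) x).det = 0 := by
    intro x
    have h1 : fderiv ℝ (fun x => G x - x) x = fderiv ℝ G x - ContinuousLinearMap.id ℝ E :=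
      ((hGd x).hasFDerivAt.sub (hasFDerivAt_id x)).fderiv
    rw [h1, add_sub_cancel]
    by_contra hdet
    have hsurj : Function.Surjective (fderiv ℝ G x) :=
      (LinearMap.equivOfDetNeZero (fderiv ℝ G x : E →ₗ[ℝ] E) hdet).surjective
    obtain ⟨u, hu⟩ := hsurj (G x)
    have h2 : HasFDerivAt (fun y => ‖G y‖ ^ 2) _ x := (hGd x).hasFDerivAt.norm_sq
    have h3 : (fun y => ‖G y‖ ^ 2) = fun _ => R ^ 2 := by ext y; rw [hGn]
    rw [h3] at h2
    have h4 := congrArg (fun T : E →L[ℝ] ℝ => T u) (h2.unique (hasFDerivAt_const (R ^ 2) x))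
    simp [hu, hGn, hR.ne'] at h4
  simp only [hdet, integral_zero] at hI
  have hpos : 0 < μ.real (closedBall (0:E) R) :=
    ENNReal.toReal_pos (measure_closedBall_pos μ _ hR).ne' measure_closedBall_lt_top.ne
  linarith

/-- Brouwer: a bounded continuous self-map of a finite dimensional space has a fixed point. -/
theorem ls_brouwer {E : Type*} [NormedAddCommGroup E] [InnerProductSpace ℝ E]
    [FiniteDimensional ℝ E] (g : E → E) (hg : Continuous g) (M : ℝ) (hM : ∀ x, ‖g x‖ ≤ M) :
    ∃ x, g x = x := by
  have hM0 : 0 ≤ M := (norm_nonneg _).trans (hM 0)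
  let χ : ContDiffBump (0:E) := ⟨M + 1, M + 2, by linarith, by linarith⟩
  let f : E → E := fun x => χ x • g x
  have hf : Continuous f := χ.continuous.smul hg
  have hfs : HasCompactSupport f := χ.hasCompactSupport.smul_right
  have hfu : UniformContinuous f := hfs.uniformContinuous_of_continuous hf
  have hfM : ∀ x, ‖f x‖ ≤ M := by
    intro x
    rw [norm_smul, Real.norm_of_nonneg χ.nonneg]
    nlinarith [χ.le_one (x := x), χ.nonneg (x := x), hM x, norm_nonneg (g x)]
  have happ : ∀ ε : ℝ, 0 < ε → ε < 1 → ∃ x ∈ closedBall (0:E) (M + 1), dist (g x) x < ε := by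
    intro ε hε hε1
    obtain ⟨k, hk, hkd⟩ := hfu.exists_contDiff_dist_le hε
    let η : ContDiffBump (0:E) := ⟨M + 1, M + 2, by linarith, by linarith⟩
    have hkn : ∀ x, ‖k x‖ ≤ M + ε := by
      intro x
      have := hkd x
      rw [dist_eq_norm] at this
      have h2 := norm_sub_norm_le (k x) (f x)
      linarith [hfM x]
    obtain ⟨x, hx⟩ := ls_zero (fun x => x - η x • k x)
      (contDiff_id.sub (η.contDiff.smul (hk.of_le (by exact_mod_cast le_top)))) (M + 2) (by linarith)
      (by
        intro x hx
        have : η x = 0 := η.zero_of_le_dist (by simp [η, hx])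
        simp [this])
    have hx' : x = η x • k x := sub_eq_zero.1 hx
    have hxn : ‖x‖ ≤ M + 1 := by
      rw [hx', norm_smul, Real.norm_of_nonneg η.nonneg]
      nlinarith [η.le_one (x := x), η.nonneg (x := x), hkn x, norm_nonneg (k x)]
    have hxm : x ∈ closedBall (0:E) (M + 1) := by simpa using hxn
    have h1 : η x = 1 := η.one_of_mem_closedBall hxm
    have h2 : χ x = 1 := χ.one_of_mem_closedBall hxm
    refine ⟨x, hxm, ?_⟩
    have h3 := hkd x
    rw [h1, one_smul] at hx'
    simp only [f, h2, one_smul, ← hx'] at h3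
    rwa [dist_comm]
  have hcomp : IsCompact (closedBall (0:E) (M + 1)) := isCompact_closedBall _ _
  obtain ⟨x, hx, hmin⟩ := hcomp.exists_isMinOn ⟨0, by simp; linarith⟩
    (f := fun x => dist (g x) x) (by fun_prop)
  refine ⟨x, dist_le_zero.1 (le_of_forall_pos_lt_add fun ε hε => ?_)⟩
  obtain ⟨y, hy, hyd⟩ := happ (min ε (1/2)) (by positivity) (by
    exact (min_le_right _ _).trans_lt (by norm_num))
  have := hmin hy
  simp only [mem_ofPred_eq] at this
  linarith [min_le_left ε (1/2)]

/-- Schauder: a continuous map with range inside a compact set has a fixed point. -/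
theorem ls_schauder {X : Type*} [NormedAddCommGroup X] [NormedSpace ℝ X]
    (F : X → X) (hF : Continuous F) (K : Set X) (hK : IsCompact K) (hFK : ∀ x, F x ∈ K) :
    ∃ u, F u = u := by
  classical
  have happ : ∀ ε : ℝ, 0 < ε → ∃ u, dist u (F u) ≤ ε := by
    intro ε hε
    obtain ⟨T, hTK, hT⟩ := hK.elim_nhds_subcover (fun x => ball x ε)
      (fun x _ => ball_mem_nhds x hε)
    let m : T → X → ℝ := fun i y => max 0 (ε - dist y i)
    have hmc : ∀ i, Continuous (m i) := fun i => by simp only [m]; fun_prop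
    have hm0 : ∀ i y, 0 ≤ m i y := fun i y => le_max_left _ _
    let S : X → ℝ := fun y => ∑ i, m i y
    have hSc : Continuous S := continuous_finsetSum _ fun i _ => hmc i
    have hS : ∀ y ∈ K, 0 < S y := by
      intro y hy
      obtain ⟨i, hi, hyi⟩ := mem_iUnion₂.1 (hT hy)
      refine Finset.sum_pos' (fun i _ => hm0 i y) ⟨⟨i, hi⟩, Finset.mem_univ _, ?_⟩
      exact lt_max_of_lt_right (sub_pos.2 hyi)
    let w : T → X → ℝ := fun i y => m i y / S y
    have hwb : ∀ i, ∀ y ∈ K, ‖w i y‖ ≤ 1 := by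
      intro i y hy
      rw [Real.norm_of_nonneg (div_nonneg (hm0 i y) (hS y hy).le), div_le_one (hS y hy)]
      exact Finset.single_le_sum (fun i _ => hm0 i y) (Finset.mem_univ i)
    let Λ : EuclideanSpace ℝ T → X := fun c => ∑ i, c i • (i : X)
    have hΛ : Continuous Λ := by simp only [Λ]; fun_prop
    let Q : EuclideanSpace ℝ T → EuclideanSpace ℝ T :=
      fun c => WithLp.toLp 2 fun i => w i (F (Λ c))
    have hQ : Continuous Q := by
      refine (PiLp.continuous_toLp 2 _).comp (continuous_pi fun i => ?_)
      exact ((hmc i).comp (hF.comp hΛ)).div (hSc.comp (hF.comp hΛ))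
        (fun c => (hS _ (hFK _)).ne')
    obtain ⟨c, hc⟩ := ls_brouwer Q hQ (√(∑ _i : T, (1:ℝ))) (by
      intro c
      rw [EuclideanSpace.norm_eq]
      refine Real.sqrt_le_sqrt (Finset.sum_le_sum fun i _ => ?_)
      have := hwb i _ (hFK (Λ c))
      exact pow_le_one₀ (norm_nonneg _) this)
    refine ⟨Λ c, ?_⟩
    set y := F (Λ c) with hy
    have hSy : 0 < S y := hS y (hFK _)
    have hci : ∀ i, c i = w i y := fun i => by
      conv_lhs => rw [← hc]
    have hsum : ∑ i, w i y = 1 := by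
      simp only [w]
      rw [← Finset.sum_div]
      exact div_self hSy.ne'
    have h1 : Λ c - y = ∑ i, w i y • ((i : X) - y) := by
      simp only [smul_sub, Finset.sum_sub_distrib, ← Finset.sum_smul, hsum, one_smul, Λ, hci]
    rw [dist_eq_norm, h1]
    calc ‖∑ i, w i y • ((i : X) - y)‖ ≤ ∑ i, ‖w i y • ((i : X) - y)‖ := norm_sum_le _ _
      _ ≤ ∑ i, w i y * ε := by
        refine Finset.sum_le_sum fun i _ => ?_
        have hw0 : 0 ≤ w i y := div_nonneg (hm0 i y) hSy.le
        rw [norm_smul, Real.norm_of_nonneg hw0]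
        by_cases hd : dist y i ≤ ε
        · refine mul_le_mul_of_nonneg_left ?_ hw0
          rwa [← dist_eq_norm, dist_comm]
        · have : w i y = 0 := by
            simp only [w, m]
            rw [max_eq_left (by linarith), zero_div]
          simp [this]
      _ = ε := by rw [← Finset.sum_mul, hsum, one_mul]
  choose u hu using fun n : ℕ => happ (1 / ((n:ℝ) + 1)) (by positivity)
  obtain ⟨z, _, σ, hσ, hz⟩ := hK.tendsto_subseq (fun n => hFK (u n))
  have hd : Filter.Tendsto (fun n => dist (u (σ n)) (F (u (σ n)))) Filter.atTop (nhds 0) := by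
    refine squeeze_zero (fun _ => dist_nonneg) (fun n => hu (σ n)) ?_
    exact (tendsto_one_div_add_atTop_nhds_zero_nat (𝕜 := ℝ)).comp hσ.tendsto_atTop
  have huz : Filter.Tendsto (fun n => u (σ n)) Filter.atTop (nhds z) := by
    refine (tendsto_iff_of_dist hd).2 hz
  exact ⟨z, tendsto_nhds_unique ((hF.tendsto z).comp huz) hz⟩

end LSAux


/-- **Leray–Schauder alternative principle.** If `X` is a real Banach space and
`g : X → X` is compact (continuous and mapping bounded sets into relatively
compact sets), then either `g` has a fixed point, or the set
`K(g) = {u : u = t • g u for some 0 < t < 1}` is unbounded. -/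
theorem leray_schauder_alternative
    {X : Type*} [NormedAddCommGroup X] [NormedSpace ℝ X] [CompleteSpace X]
    (g : X → X) (hg_cont : Continuous g)
    (hg_comp : ∀ s : Set X, Bornology.IsBounded s → IsCompact (closure (g '' s))) :
    (∃ u : X, g u = u) ∨
      ¬ Bornology.IsBounded {u : X | ∃ t : ℝ, 0 < t ∧ t < 1 ∧ u = t • g u} := by
  by_contra hcon
  push Not at hcon
  obtain ⟨hnofix, hbd⟩ := hcon
  obtain ⟨R₀, hR₀⟩ := hbd.subset_ball (0 : X)
  obtain ⟨R, hR, hRR⟩ : ∃ R : ℝ, 0 < R ∧ R₀ ≤ R := ⟨max 1 R₀, by positivity, le_max_right _ _⟩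
  let r : X → X := fun x => (R / max R ‖x‖) • x
  have hmax : ∀ x : X, 0 < max R ‖x‖ := fun x => lt_max_of_lt_left hR
  have hrc : Continuous r :=
    (continuous_const.div (continuous_const.max continuous_norm) fun x => (hmax x).ne').smul
      continuous_id
  have hrn : ∀ x, ‖r x‖ ≤ R := by
    intro x
    simp only [r]
    rw [norm_smul, Real.norm_of_nonneg (by positivity), div_mul_eq_mul_div, div_le_iff₀ (hmax x)]
    exact mul_le_mul_of_nonneg_left (le_max_right _ _) hR.le
  have hrid : ∀ x, ‖x‖ ≤ R → r x = x := by
    intro x hx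
    simp only [r]
    rw [max_eq_left hx, div_self hR.ne', one_smul]
  obtain ⟨u, hu⟩ := ls_schauder (fun x => r (g (r x))) (hrc.comp (hg_cont.comp hrc))
    (r '' closure (g '' Metric.closedBall 0 R))
    ((hg_comp _ Metric.isBounded_closedBall).image hrc)
    (fun x => ⟨_, subset_closure ⟨r x, by simpa using hrn x, rfl⟩, rfl⟩)
  have hun : ‖u‖ ≤ R := by rw [← hu]; exact hrn _
  simp only [hrid u hun] at hu
  by_cases hgu : ‖g u‖ ≤ R
  · rw [hrid _ hgu] at hu
    exact hnofix u hu
  · push Not at hgu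
    have h1 : u = (R / ‖g u‖) • g u := by
      conv_lhs => rw [← hu]
      simp only [r]
      rw [max_eq_right hgu.le]
    have hg0 : 0 < ‖g u‖ := hR.trans hgu
    have h2 : u ∈ Metric.ball (0:X) R₀ :=
      hR₀ ⟨R / ‖g u‖, by positivity, (div_lt_one hg0).2 hgu, h1⟩
    have h3 : ‖u‖ = R := by
      rw [h1, norm_smul, norm_div, norm_norm, Real.norm_of_nonneg hR.le]
      field_simp
    rw [mem_ball_zero_iff] at h2
    linarith
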